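/- arXiv:1506.03827 — 2 statements merged into one kernel-verified Lean document; each statement's English description precedes it below -/
import Mathlib

section
/- Let n ≥ 2, let p ∈ (1,n), and let Ω be a convex compact subset of ℝⁿ whose boundary has positive (n−1)-dimensional Hausdorff measure. Then cap_p(Ω) > 0. -/
open MeasureTheory Metric Set Filter

/-- The variational `p`-capacity of a set `Ω ⊆ ℝⁿ`:
`cap_p(Ω) = inf {∫ |∇f|^p : f ∈ C_c^∞(ℝⁿ), f ≥ 1 on Ω}`. -/
noncomputable def pCap (n : ℕ) (p : ℝ) (Ω : Set (EuclideanSpace ℝ (Fin n))) : ℝ :=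
  sInf { E : ℝ | ∃ f : EuclideanSpace ℝ (Fin n) → ℝ, ContDiff ℝ (⊤ : ℕ∞) f ∧ HasCompactSupport f ∧
      (∀ x ∈ Ω, 1 ≤ f x) ∧ E = ∫ x, ‖fderiv ℝ f x‖ ^ p }

/-- `σ_{n-1}`: the `(n-1)`-dimensional Hausdorff measure of the unit sphere in `ℝⁿ`. -/
noncomputable def sphereArea (n : ℕ) : ℝ :=
  ((μH[(n : ℝ) - 1] : Measure (EuclideanSpace ℝ (Fin n)))
    (Metric.sphere (0 : EuclideanSpace ℝ (Fin n)) 1)).toReal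

/-- The `(n-1)`-dimensional Hausdorff measure (surface area) of a set in `ℝⁿ`. -/
noncomputable def area (n : ℕ) (s : Set (EuclideanSpace ℝ (Fin n))) : ℝ :=
  ((μH[(n : ℝ) - 1] : Measure (EuclideanSpace ℝ (Fin n))) s).toReal

open scoped ENNReal NNReal

/-- The displacements from any base point to a set of positive `d`-dimensional Hausdorff measure
contain `d` linearly independent vectors. -/
theorem exists_linearIndependent_sub_of_hausdorffMeasure_ne_zero
    {E : Type*} [NormedAddCommGroup E] [NormedSpace ℝ E] [FiniteDimensional ℝ E]
    [MeasurableSpace E] [BorelSpace E] {s : Set E} {d : ℕ} (hs : μH[(d : ℝ)] s ≠ 0) (a : E) :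
    ∃ e : Fin d → E, LinearIndependent ℝ e ∧ ∀ i, a + e i ∈ s := by
  set W : Submodule ℝ E := Submodule.span ℝ ((fun x => x - a) '' s)
  have hd : (d : ℝ≥0∞) ≤ Module.finrank ℝ W := by
    have h₁ : ((d : ℝ≥0) : ℝ≥0∞) ≤ dimH s :=
      le_dimH_of_hausdorffMeasure_ne_zero (by simpa using hs)
    have hiso : Isometry (fun w : W => a + (w : E)) :=
      (IsometryEquiv.addLeft a).isometry.comp W.subtypeₗᵢ.isometry
    have h₂ : s ⊆ (fun w : W => a + (w : E)) '' univ := fun x hx =>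
      ⟨⟨x - a, Submodule.subset_span ⟨x, hx, rfl⟩⟩, mem_univ _, by simp⟩
    calc (d : ℝ≥0∞) = ((d : ℝ≥0) : ℝ≥0∞) := by simp
      _ ≤ dimH s := h₁
      _ ≤ dimH ((fun w : W => a + (w : E)) '' univ) := dimH_mono h₂
      _ = Module.finrank ℝ W := by rw [hiso.dimH_image, Real.dimH_univ_eq_finrank]
  have hd' : d ≤ Module.finrank ℝ W := by exact_mod_cast hd
  obtain ⟨e, hes, -, he⟩ := Submodule.exists_fun_fin_finrank_span_eq ℝ ((fun x => x - a) '' s)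
  refine ⟨e ∘ Fin.castLE hd', he.comp _ (Fin.castLE_injective hd'), fun i => ?_⟩
  obtain ⟨x, hx, hxe⟩ := hes (Fin.castLE hd' i)
  simpa [← hxe] using hx

/-- `m` linearly independent vectors in an `(m + 1)`-dimensional space span the hyperplane
`{0} × ℝᵐ` in suitable linear coordinates. -/
theorem exists_continuousLinearEquiv_prod_of_linearIndependent
    {E : Type*} [NormedAddCommGroup E] [NormedSpace ℝ E] [FiniteDimensional ℝ E]
    {m : ℕ} (hm : Module.finrank ℝ E = m + 1) {e : Fin m → E} (he : LinearIndependent ℝ e) :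
    ∃ L : (ℝ × (Fin m → ℝ)) ≃L[ℝ] E, ∀ y, L (0, y) = ∑ i, y i • e i := by
  have hne : Submodule.span ℝ (range e) ≠ ⊤ := by
    intro h
    have := finrank_span_eq_card he
    rw [h, finrank_top, hm] at this
    simp at this
  obtain ⟨w, -, hw⟩ := SetLike.exists_of_lt (lt_top_iff_ne_top.2 hne)
  let b := basisOfLinearIndependentOfCardEqFinrank (he.finCons hw) (by simp [hm])
  refine ⟨((Fin.consLinearEquiv ℝ fun _ : Fin (m + 1) => ℝ).trans
    b.equivFun.symm).toContinuousLinearEquiv, fun y => ?_⟩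
  simp [b, Module.Basis.equivFun_symm_apply, Fin.sum_univ_succ, Fin.consLinearEquiv, Fin.consEquiv]

/-- A convex set containing `a` and all `a + e i` contains the simplex they span. -/
theorem Convex.add_sum_smul_mem {E : Type*} [AddCommGroup E] [Module ℝ E] {s : Set E}
    (hs : Convex ℝ s) {ι : Type*} [Fintype ι] {a : E} (ha : a ∈ s) {e : ι → E}
    (he : ∀ i, a + e i ∈ s) {y : ι → ℝ} (hy : ∀ i, 0 ≤ y i) (hy1 : ∑ i, y i ≤ 1) :
    a + ∑ i, y i • e i ∈ s := by
  have h := hs.sum_mem (t := Finset.univ) (w := fun o : Option ι => o.elim (1 - ∑ i, y i) y)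
    (z := fun o => o.elim a fun i => a + e i)
    (by rintro (_ | i) - <;> simp [hy, hy1]) (by simp [Fintype.sum_option])
    (by rintro (_ | i) - <;> simp [ha, he])
  convert h using 1
  simp only [Fintype.sum_option, Option.elim, smul_add, Finset.sum_add_distrib, ← Finset.sum_smul]
  module

/-- A trace inequality: if `1 ≤ G` on `{0} × B`, then the volume of `B` is controlled by the
`W^{1,1}` norm of `G` on `[0, 1] × B`. -/
theorem volume_le_lintegral_enorm_add_lintegral_enorm_fderiv
    {Y : Type*} [NormedAddCommGroup Y] [NormedSpace ℝ Y] [MeasureSpace Y] [BorelSpace Y]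
    [SecondCountableTopology Y] [SigmaFinite (volume : Measure Y)]
    {G : ℝ × Y → ℝ} (hG : ContDiff ℝ 1 G) {B : Set Y} (hB : MeasurableSet B)
    (h1 : ∀ y ∈ B, 1 ≤ G (0, y)) :
    volume B ≤ (∫⁻ z in Icc (0 : ℝ) 1 ×ˢ B, ‖G z‖ₑ) +
      ∫⁻ z in Icc (0 : ℝ) 1 ×ˢ B, ‖fderiv ℝ G z‖ₑ := by
  have hGc := hG.continuous
  have hDc : Continuous (fderiv ℝ G) := hG.continuous_fderiv one_ne_zero
  have hGm : Measurable fun z => ‖G z‖ₑ := hGc.enorm.measurable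
  have hDm : Measurable fun z => ‖fderiv ℝ G z‖ₑ := hDc.enorm.measurable
  have key : ∀ y ∈ B, ∀ t ∈ Icc (0 : ℝ) 1,
      1 ≤ ‖G (t, y)‖ₑ + ∫⁻ s in Icc (0 : ℝ) 1, ‖fderiv ℝ G (s, y)‖ₑ := by
    intro y hy t ht
    have hderiv : ∀ s : ℝ, HasDerivAt (fun s => G (s, y)) (fderiv ℝ G (s, y) (1, 0)) s := by
      intro s
      exact (hG.differentiable one_ne_zero (s, y)).hasFDerivAt.comp_hasDerivAt s
        ((hasDerivAt_id s).prodMk (hasDerivAt_const s y))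
    have hcont : Continuous fun s : ℝ => fderiv ℝ G (s, y) (1, 0) := by fun_prop
    have hint := intervalIntegral.integral_eq_sub_of_hasDerivAt (a := 0) (b := t)
      (fun s _ => hderiv s) (hcont.intervalIntegrable _ _)
    have hle : ‖∫ s in (0 : ℝ)..t, fderiv ℝ G (s, y) (1, 0)‖ₑ ≤
        ∫⁻ s in Icc (0 : ℝ) 1, ‖fderiv ℝ G (s, y)‖ₑ := by
      rw [intervalIntegral.integral_of_le ht.1]
      refine (enorm_integral_le_lintegral_enorm _).trans ?_
      have hsub : Ioc 0 t ⊆ Icc (0 : ℝ) 1 := fun s hs => ⟨hs.1.le, hs.2.trans ht.2⟩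
      refine (lintegral_mono_set hsub).trans ?_
      refine lintegral_mono fun s => ?_
      have h := (fderiv ℝ G (s, y)).le_opNorm (1, 0)
      rw [show ‖((1 : ℝ), (0 : Y))‖ = 1 by simp [Prod.norm_def], mul_one] at h
      exact enorm_le_iff_norm_le.2 h
    calc (1 : ℝ≥0∞) = ‖(1 : ℝ)‖ₑ := by simp
      _ ≤ ‖G (0, y)‖ₑ := enorm_le_iff_norm_le.2 (by
          rw [norm_one]; exact (h1 y hy).trans (le_abs_self _))
      _ = ‖G (t, y) - ∫ s in (0 : ℝ)..t, fderiv ℝ G (s, y) (1, 0)‖ₑ := by rw [hint]; simp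
      _ ≤ ‖G (t, y)‖ₑ + ‖∫ s in (0 : ℝ)..t, fderiv ℝ G (s, y) (1, 0)‖ₑ := enorm_sub_le
      _ ≤ _ := by gcongr
  have hswap : ∀ F : ℝ × Y → ℝ≥0∞, Measurable F → ∫⁻ z in Icc (0 : ℝ) 1 ×ˢ B, F z =
      ∫⁻ y in B, ∫⁻ s in Icc (0 : ℝ) 1, F (s, y) := by
    intro F hF
    rw [Measure.volume_eq_prod, ← Measure.prod_restrict, lintegral_prod_symm' _ hF]
  rw [hswap _ hGm, hswap _ hDm, ← lintegral_add_right]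
  · calc volume B = ∫⁻ _ in B, 1 := by simp
      _ ≤ _ := by
        refine setLIntegral_mono' hB fun y hy => ?_
        calc (1 : ℝ≥0∞) = ∫⁻ _ in Icc (0 : ℝ) 1, 1 := by simp
          _ ≤ ∫⁻ t in Icc (0 : ℝ) 1, (‖G (t, y)‖ₑ +
                ∫⁻ s in Icc (0 : ℝ) 1, ‖fderiv ℝ G (s, y)‖ₑ) :=
              setLIntegral_mono' measurableSet_Icc (key y hy)
          _ = _ := by
              rw [lintegral_add_right _ measurable_const]
              simp
  · exact hDm.lintegral_prod_left'

/-- Integrals over an affinely parametrised set of finite measure are controlled by `L^q` norms. -/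
theorem exists_setLIntegral_comp_affine_le_eLpNorm
    {X E : Type*} [NormedAddCommGroup X] [NormedSpace ℝ X] [MeasureSpace X] [BorelSpace X]
    [(volume : Measure X).IsAddHaarMeasure]
    [NormedAddCommGroup E] [NormedSpace ℝ E] [FiniteDimensional ℝ E] [MeasureSpace E]
    [BorelSpace E] [(volume : Measure E).IsAddHaarMeasure]
    (L : X ≃L[ℝ] E) (a : E) {Q : Set X} (hQ : volume Q ≠ ∞)
    {q : ℝ≥0} (hq : 1 ≤ q) (H : Type*) [NormedAddCommGroup H] :
    ∃ C : ℝ≥0∞, C ≠ ∞ ∧ ∀ g : E → H, Continuous g →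
      ∫⁻ z in Q, ‖g (a + L z)‖ₑ ≤ C * eLpNorm g q volume := by
  set c : ℝ≥0 := Measure.addHaarScalarFactor ((volume : Measure X).map L) (volume : Measure E)
  have hmap : (volume : Measure X).map L = (c : ℝ≥0∞) • (volume : Measure E) :=
    Measure.isAddLeftInvariant_eq_smul _ _
  have hT : Measurable fun z : X => a + L z := by fun_prop
  have hmapT : (volume : Measure X).map (fun z => a + L z) = (c : ℝ≥0∞) • (volume : Measure E) := by
    have : (fun z : X => a + L z) = (fun x => a + x) ∘ L := rfl
    rw [this, ← Measure.map_map (by fun_prop) (by fun_prop), hmap, Measure.map_smul,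
      map_add_left_eq_self]
  set ν : Measure E := ((volume : Measure X).restrict Q).map (fun z => a + L z) with hν
  have hνle : ν ≤ (c : ℝ≥0∞) • (volume : Measure E) := by
    rw [← hmapT]
    exact Measure.map_mono Measure.restrict_le_self hT
  have hνuniv : ν univ = volume Q := by
    rw [hν, Measure.map_apply hT MeasurableSet.univ]; simp
  refine ⟨(c : ℝ≥0∞) ^ (1 / (q : ℝ≥0∞)).toReal *
    volume Q ^ (1 / (1 : ℝ≥0∞).toReal - 1 / (q : ℝ≥0∞).toReal), ?_, fun g hg => ?_⟩
  · refine ENNReal.mul_ne_top (ENNReal.rpow_ne_top_of_nonneg (by positivity) (by simp))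
      (ENNReal.rpow_ne_top_of_nonneg ?_ hQ)
    have : (1 : ℝ) ≤ q := hq
    simpa using inv_le_one_of_one_le₀ this
  · calc ∫⁻ z in Q, ‖g (a + L z)‖ₑ = eLpNorm g 1 ν := by
          borelize H
          rw [eLpNorm_one_eq_lintegral_enorm, hν, lintegral_map hg.enorm.measurable hT]
      _ ≤ eLpNorm g q ν * ν univ ^ (1 / (1 : ℝ≥0∞).toReal - 1 / (q : ℝ≥0∞).toReal) :=
          eLpNorm_le_eLpNorm_mul_rpow_measure_univ (by exact_mod_cast hq)
            hg.aestronglyMeasurable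
      _ ≤ eLpNorm g q ((c : ℝ≥0∞) • volume) *
            volume Q ^ (1 / (1 : ℝ≥0∞).toReal - 1 / (q : ℝ≥0∞).toReal) := by
          rw [hνuniv]
          gcongr
      _ = _ := by
          rw [eLpNorm_smul_measure_of_ne_top (by simp), smul_eq_mul, mul_right_comm]

/-- In an `(m + 1)`-dimensional space, functions which are at least `1` on a set of positive measure
in a hyperplane have `L^p` norm of the gradient bounded below, if `1 ≤ p < m + 1`. -/
theorem exists_volume_le_mul_eLpNorm_fderiv
    {E : Type*} [NormedAddCommGroup E] [NormedSpace ℝ E] [FiniteDimensional ℝ E] [MeasureSpace E]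
    [BorelSpace E] [(volume : Measure E).IsAddHaarMeasure] {m : ℕ}
    (L : (ℝ × (Fin m → ℝ)) ≃L[ℝ] E) (a : E) {B : Set (Fin m → ℝ)} (hB : MeasurableSet B)
    (hBfin : volume B ≠ ∞) {p : ℝ≥0} (hp : 1 ≤ p) (hpE : (p : ℝ) < Module.finrank ℝ E) :
    ∃ C : ℝ≥0∞, C ≠ ∞ ∧ ∀ f : E → ℝ, ContDiff ℝ 1 f → HasCompactSupport f →
      (∀ y ∈ B, 1 ≤ f (a + L (0, y))) → volume B ≤ C * eLpNorm (fderiv ℝ f) p volume := by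
  have hp1 : (1 : ℝ) ≤ p := hp
  have hp0 : (0 : ℝ) < p := by linarith
  have hE0 : (0 : ℝ) < Module.finrank ℝ E := hp0.trans hpE
  have hinv : (0 : ℝ) < (p : ℝ)⁻¹ - (Module.finrank ℝ E : ℝ)⁻¹ :=
    sub_pos.2 (inv_strictAnti₀ hp0 hpE)
  set q : ℝ≥0 := ⟨((p : ℝ)⁻¹ - (Module.finrank ℝ E : ℝ)⁻¹)⁻¹, (inv_pos.2 hinv).le⟩
  have hq1 : 1 ≤ q := by
    rw [← NNReal.coe_le_coe, NNReal.coe_one]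
    refine (one_le_inv₀ hinv).2 ?_
    have := inv_le_one_of_one_le₀ hp1
    have := inv_pos.2 hE0
    linarith
  have hQ : volume (Icc (0 : ℝ) 1 ×ˢ B) ≠ ∞ := by
    rw [Measure.volume_eq_prod, Measure.prod_prod]
    exact ENNReal.mul_ne_top (by simp) hBfin
  have : (volume : Measure (ℝ × (Fin m → ℝ))).IsAddHaarMeasure := by
    rw [Measure.volume_eq_prod]; infer_instance
  obtain ⟨C₀, hC₀, h₀⟩ := exists_setLIntegral_comp_affine_le_eLpNorm L a hQ hq1 ℝ
  obtain ⟨C₁, hC₁, h₁⟩ := exists_setLIntegral_comp_affine_le_eLpNorm L a hQ hp (E →L[ℝ] ℝ)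
  set S : ℝ≥0 := SNormLESNormFDerivOfEqConst ℝ (volume : Measure E) p
  set K : ℝ≥0 := ‖(L : (ℝ × (Fin m → ℝ)) →L[ℝ] E)‖₊
  refine ⟨C₀ * S + K * C₁, by finiteness, fun f hf hfc hf1 => ?_⟩
  have hsob : eLpNorm f q volume ≤ S * eLpNorm (fderiv ℝ f) p volume :=
    eLpNorm_le_eLpNorm_fderiv_of_eq volume hf hfc hp (by exact_mod_cast hE0)
      (inv_inv _)
  have hG : ContDiff ℝ 1 fun z => f (a + L z) := by fun_prop
  have hDG : ∀ z, ‖fderiv ℝ (fun z => f (a + L z)) z‖ₑ ≤ K * ‖fderiv ℝ f (a + L z)‖ₑ := by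
    intro z
    have h : HasFDerivAt (fun z => f (a + L z))
        ((fderiv ℝ f (a + L z)).comp (L : (ℝ × (Fin m → ℝ)) →L[ℝ] E)) z :=
      (hf.differentiable one_ne_zero _).hasFDerivAt.comp z (L.hasFDerivAt.const_add a)
    rw [h.fderiv, mul_comm]
    have := (fderiv ℝ f (a + L z)).opNorm_comp_le (L : (ℝ × (Fin m → ℝ)) →L[ℝ] E)
    simp only [enorm, ← ENNReal.coe_mul, ENNReal.coe_le_coe, K]
    exact this
  have hDc : Continuous (fderiv ℝ f) := hf.continuous_fderiv one_ne_zero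
  calc volume B ≤ _ := volume_le_lintegral_enorm_add_lintegral_enorm_fderiv hG hB hf1
    _ ≤ C₀ * (S * eLpNorm (fderiv ℝ f) p volume) +
          K * (C₁ * eLpNorm (fderiv ℝ f) p volume) := by
        refine add_le_add ((h₀ f hf.continuous).trans (by gcongr)) ?_
        refine (lintegral_mono hDG).trans ?_
        rw [lintegral_const_mul' _ _ ENNReal.coe_ne_top]
        gcongr
        exact h₁ _ hDc
    _ = _ := by ring

/-- Every compact set admits a smooth compactly supported function which is at least `1` on it. -/
theorem exists_contDiff_hasCompactSupport_one_le {E : Type*} [NormedAddCommGroup E]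
    [InnerProductSpace ℝ E] [FiniteDimensional ℝ E] {K : Set E} (hK : IsCompact K) :
    ∃ f : E → ℝ, ContDiff ℝ (⊤ : ℕ∞) f ∧ HasCompactSupport f ∧ ∀ x ∈ K, 1 ≤ f x := by
  obtain ⟨r, hr, hKr⟩ := hK.isBounded.subset_closedBall_lt 0 (0 : E)
  let φ : ContDiffBump (0 : E) := ⟨r, r + 1, hr, by linarith⟩
  exact ⟨φ, φ.contDiff, φ.hasCompactSupport,
    fun x hx => (φ.one_of_mem_closedBall (hKr hx)).ge⟩

/-- A convex compact set with boundary of positive surface area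
has positive `p`-capacity for every `p ∈ (1,n)`. -/
theorem pCap_pos_of_area_pos
    (n : ℕ) (hn : 2 ≤ n) (p : ℝ) (hp : p ∈ Set.Ioo (1 : ℝ) (n : ℝ))
    (Ω : Set (EuclideanSpace ℝ (Fin n))) (hconv : Convex ℝ Ω) (hcomp : IsCompact Ω)
    (harea : 0 < area n (frontier Ω)) :
    0 < pCap n p Ω := by
  obtain ⟨m, rfl⟩ : ∃ m, n = m + 1 := ⟨n - 1, by omega⟩
  have hp0 : 0 < p := one_pos.trans hp.1
  lift p to ℝ≥0 using hp0.le
  have hmeas : μH[(m : ℝ)] (frontier Ω) ≠ 0 := by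
    intro h
    have hcast : (((m + 1 : ℕ) : ℝ) - 1) = m := by push_cast; ring
    rw [area, hcast, h] at harea
    simp at harea
  have hsub : frontier Ω ⊆ Ω := hcomp.isClosed.frontier_subset
  obtain ⟨a, ha⟩ := nonempty_of_measure_ne_zero hmeas
  obtain ⟨e, he, heΩ⟩ := exists_linearIndependent_sub_of_hausdorffMeasure_ne_zero hmeas a
  obtain ⟨L, hL⟩ := exists_continuousLinearEquiv_prod_of_linearIndependent (by simp) he
  set B : Set (Fin m → ℝ) := Icc 0 fun _ => ((m : ℝ) + 1)⁻¹
  have hBΩ : ∀ y ∈ B, a + L (0, y) ∈ Ω := by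
    intro y hy
    rw [hL]
    refine hconv.add_sum_smul_mem (hsub ha) (fun i => hsub (heΩ i)) hy.1 ?_
    calc ∑ i, y i ≤ ∑ _i : Fin m, ((m : ℝ) + 1)⁻¹ := Finset.sum_le_sum fun i _ => hy.2 i
      _ = m / (m + 1) := by simp [div_eq_mul_inv]
      _ ≤ 1 := by rw [div_le_one (by positivity)]; linarith
  have hBvol : volume B = ENNReal.ofReal ((((m : ℝ) + 1)⁻¹) ^ m) := by
    rw [Real.volume_Icc_pi, ENNReal.ofReal_pow (by positivity)]
    simp
  have hB0 : volume B ≠ 0 := by rw [hBvol]; simp; positivity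
  have hBtop : volume B ≠ ∞ := by rw [hBvol]; simp
  obtain ⟨C, hC, hbound⟩ := exists_volume_le_mul_eLpNorm_fderiv L a measurableSet_Icc hBtop
    (p := p) (by exact_mod_cast hp.1.le) (by simpa using hp.2)
  have hδ : 0 < (volume B / C).toReal :=
    ENNReal.toReal_pos (ENNReal.div_pos hB0 hC).ne' (by
      refine ENNReal.div_ne_top hBtop fun h => ?_
      obtain ⟨f, hf, hfc, hf1⟩ := exists_contDiff_hasCompactSupport_one_le hcomp
      have := hbound f (hf.of_le (by exact_mod_cast le_top)) hfc fun y hy => hf1 _ (hBΩ y hy)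
      exact hB0 (by simpa [h] using this))
  refine lt_of_lt_of_le (Real.rpow_pos_of_pos hδ p) (le_csInf ?_ ?_)
  · obtain ⟨f, hf, hfc, hf1⟩ := exists_contDiff_hasCompactSupport_one_le hcomp
    exact ⟨_, f, hf, hfc, hf1, rfl⟩
  · rintro E ⟨f, hf, hfc, hf1, rfl⟩
    have hf' : ContDiff ℝ 1 f := hf.of_le (by exact_mod_cast le_top)
    have hD : MemLp (fderiv ℝ f) p volume :=
      (hf'.continuous_fderiv one_ne_zero).memLp_of_hasCompactSupport (hfc.fderiv ℝ)
    have hle : volume B / C ≤ eLpNorm (fderiv ℝ f) p volume :=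
      ENNReal.div_le_of_le_mul' (hbound f hf' hfc fun y hy => hf1 _ (hBΩ y hy))
    have hint : 0 ≤ ∫ x, ‖fderiv ℝ f x‖ ^ (p : ℝ) := integral_nonneg fun x => by positivity
    rw [hD.eLpNorm_eq_integral_rpow_norm (by exact_mod_cast hp0.ne') (by simp)] at hle
    have hle' := ENNReal.toReal_le_of_le_ofReal (by positivity) hle
    calc (volume B / C).toReal ^ (p : ℝ)
        ≤ ((∫ x, ‖fderiv ℝ f x‖ ^ (p : ℝ)) ^ (p : ℝ)⁻¹) ^ (p : ℝ) := by
          gcongr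
          simpa using hle'
      _ = _ := Real.rpow_inv_rpow hint hp0.ne'
end

section
/- Let n ≥ 3 and let Ω be a convex compact subset of ℝⁿ with nonempty interior and smooth boundary. Then for every x ∈ ℝⁿ and every r > 0, ∫_{∂Ω}|x−y|^{2−n} dσ(y) ≤ area(∂Ω)·r + (n−2)·σ_{n−1}·r^{1/(2−n)}, where the integral is with respect to the (n−1)-dimensional Hausdorff measure σ on ∂Ω. -/
open MeasureTheory Metric Set Filter

/-- A set `Ω ⊆ ℝⁿ` has smooth (C^∞) boundary: near each boundary point, the
boundary is the regular zero set of a smooth real-valued function. -/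
def HasSmoothBoundary (n : ℕ) (Ω : Set (EuclideanSpace ℝ (Fin n))) : Prop :=
  ∀ x ∈ frontier Ω, ∃ (U : Set (EuclideanSpace ℝ (Fin n))) (f : EuclideanSpace ℝ (Fin n) → ℝ),
    IsOpen U ∧ x ∈ U ∧ ContDiff ℝ (⊤ : ℕ∞) f ∧ (∀ y ∈ U, fderiv ℝ f y ≠ 0) ∧
    U ∩ frontier Ω = U ∩ f ⁻¹' {0}

open scoped ENNReal NNReal

/-- The Euclidean unit sphere has finite codimension-one Hausdorff measure. -/
theorem hausdorffMeasure_unit_sphere_lt_top (m : ℕ) :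
    (μH[(m : ℝ)] : Measure (EuclideanSpace ℝ (Fin (m + 1)))) (sphere 0 1) < ∞ := by
  set P : Fin (m + 1) → ℝ → (Fin m → ℝ) → EuclideanSpace ℝ (Fin (m + 1)) :=
    fun i s w => WithLp.toLp 2 (i.insertNth s w : Fin (m + 1) → ℝ) with hP
  set F : Fin (m + 1) → ℝ → (Fin m → ℝ) → EuclideanSpace ℝ (Fin (m + 1)) :=
    fun i s w => ‖P i s w‖⁻¹ • P i s w with hF
  have hface : ∀ i, ∀ s : ℝ, s ≠ 0 →
      (μH[(m : ℝ)] : Measure (EuclideanSpace ℝ (Fin (m + 1)))) (F i s '' Icc (-1) 1) < ∞ := by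
    intro i s hs
    have hPd : ContDiff ℝ 1 (P i s) := by
      rw [contDiff_euclidean]
      intro j
      refine Fin.succAboveCases i ?_ (fun k => ?_) j
      · simpa [hP] using contDiff_const
      · simpa [hP] using contDiff_apply ℝ ℝ k
    have hP0 : ∀ w, P i s w ≠ 0 := fun w h => hs (by
      have := congrArg (fun v : EuclideanSpace ℝ (Fin (m + 1)) => v i) h
      simpa [hP] using this)
    have hFd : ContDiff ℝ 1 (F i s) :=
      ((hPd.norm ℝ hP0).inv fun w => norm_ne_zero_iff.2 (hP0 w)).smul hPd
    obtain ⟨K, hK⟩ := hFd.contDiffOn.exists_lipschitzOnWith one_ne_zero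
      (convex_Icc (-1 : Fin m → ℝ) 1) isCompact_Icc
    refine (hK.hausdorffMeasure_image_le (Nat.cast_nonneg m)).trans_lt ?_
    refine ENNReal.mul_lt_top (ENNReal.rpow_lt_top_of_nonneg (by positivity) (by simp)) ?_
    have hvol : (μH[(m : ℝ)] : Measure (Fin m → ℝ)) = volume := by
      simpa using hausdorffMeasure_pi_real (ι := Fin m)
    rw [hvol]
    exact isCompact_Icc.measure_lt_top
  have hcover : sphere (0 : EuclideanSpace ℝ (Fin (m + 1))) 1 ⊆
      ⋃ i, (F i 1 '' Icc (-1) 1 ∪ F i (-1) '' Icc (-1) 1) := by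
    intro u hu
    have hu1 : ‖u‖ = 1 := by simpa using hu
    obtain ⟨i, hi⟩ := Finite.exists_max fun j => |u j|
    have hc : 0 < |u i| := by
      by_contra! h
      have : u = 0 := by
        ext j
        exact abs_nonpos_iff.1 ((hi j).trans h)
      simp [this] at hu1
    set w : Fin m → ℝ := fun j => |u i|⁻¹ * u (i.succAbove j)
    have hw : w ∈ Icc (-1 : Fin m → ℝ) 1 := by
      have hle : ∀ j, |w j| ≤ 1 := fun j => by
        rw [abs_mul, abs_inv, abs_abs, inv_mul_le_iff₀ hc, mul_one]
        exact hi _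
      exact ⟨fun j => (abs_le.1 (hle j)).1, fun j => (abs_le.1 (hle j)).2⟩
    have hFw : ∀ s : ℝ, s = |u i|⁻¹ * u i → F i s w = u := by
      intro s hs
      have hPu : P i s w = |u i|⁻¹ • u := by
        ext j
        refine Fin.succAboveCases i ?_ (fun k => ?_) j
        · simp [hP, hs]
        · simp [hP, w]
      simp only [hF, hPu, norm_smul, hu1, norm_inv, Real.norm_eq_abs, abs_abs, mul_one, inv_inv]
      rw [smul_smul, mul_inv_cancel₀ hc.ne', one_smul]
    refine mem_iUnion.2 ⟨i, ?_⟩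
    rcases abs_cases (u i) with ⟨h, -⟩ | ⟨h, -⟩
    · refine Or.inl ⟨w, hw, hFw 1 ?_⟩
      rw [← h, abs_abs, inv_mul_cancel₀ hc.ne']
    · refine Or.inr ⟨w, hw, hFw (-1) ?_⟩
      rw [← neg_neg (u i), ← h, abs_neg, abs_abs, mul_neg, inv_mul_cancel₀ hc.ne']
  refine (measure_mono hcover).trans_lt ((measure_iUnion_le _).trans_lt ?_)
  rw [tsum_fintype]
  exact ENNReal.sum_lt_top.2 fun i _ =>
    (measure_union_le _ _).trans_lt
      (ENNReal.add_lt_top.2 ⟨hface i 1 one_ne_zero, hface i (-1) (by norm_num)⟩)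

section InnerProduct

variable {E : Type*} [NormedAddCommGroup E] [InnerProductSpace ℝ E]

/-- A boundary point of a convex set with nonempty interior has a nonzero outer normal vector. -/
theorem Convex.exists_outer_normal [CompleteSpace E] {Ω : Set E} (hconv : Convex ℝ Ω)
    (hint : (interior Ω).Nonempty) {y : E} (hy : y ∈ frontier Ω) :
    ∃ v : E, v ≠ 0 ∧ ∀ a ∈ Ω, inner ℝ v (a - y) ≤ 0 := by
  obtain ⟨f, hf⟩ := geometric_hahn_banach_open_point hconv.interior isOpen_interior hy.2
  refine ⟨(InnerProductSpace.toDual ℝ E).symm f, ?_, fun a ha => ?_⟩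
  · intro h
    obtain ⟨p, hp⟩ := hint
    have hf0 : f = 0 := by simpa using h
    simpa [hf0] using hf p hp
  · rw [InnerProductSpace.toDual_symm_apply, map_sub, sub_nonpos]
    have hcl : closure (interior Ω) ⊆ {a | f a ≤ f y} :=
      closure_minimal (fun b hb => (hf b hb).le) (isClosed_le f.continuous continuous_const)
    rw [hconv.closure_interior_eq_closure_of_nonempty_interior hint] at hcl
    exact hcl (subset_closure ha)

/-- A ray issuing from a point of a closed ball meets the bounding sphere. -/
theorem exists_nonneg_add_smul_mem_sphere {x y v : E} {ρ : ℝ} (hy : y ∈ closedBall x ρ)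
    (hv : v ≠ 0) : ∃ t : ℝ, 0 ≤ t ∧ y + t • v ∈ sphere x ρ := by
  have hv' : 0 < ‖v‖ := norm_pos_iff.2 hv
  have hy' : ‖y - x‖ ≤ ρ := by simpa [dist_eq_norm] using hy
  have hρ : 0 ≤ ρ := (norm_nonneg _).trans hy'
  have hT : 0 ≤ 2 * ρ / ‖v‖ := by positivity
  have hcont : ContinuousOn (fun t : ℝ => ‖y + t • v - x‖) (Icc 0 (2 * ρ / ‖v‖)) := by fun_prop
  obtain ⟨t, ht, htx⟩ := intermediate_value_Icc hT hcont (show ρ ∈ _ from by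
    refine ⟨by simpa using hy', ?_⟩
    have h1 : ‖(2 * ρ / ‖v‖) • v‖ = 2 * ρ := by
      rw [norm_smul, Real.norm_of_nonneg hT, div_mul_cancel₀ _ hv'.ne']
    have h2 := norm_sub_norm_le ((2 * ρ / ‖v‖) • v) (-(y - x))
    rw [norm_neg, h1, show (2 * ρ / ‖v‖) • v - -(y - x) = y + (2 * ρ / ‖v‖) • v - x by abel] at h2
    linarith)
  exact ⟨t, ht.1, by simpa [dist_eq_norm] using htx⟩

/-- If `z - y` and `z' - y'` point away from each other, then `y, y'` are no farther apart than
`z, z'`. -/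
theorem dist_le_dist_of_inner_nonpos {y y' z z' : E} (h : inner ℝ (z - y) (y' - y) ≤ 0)
    (h' : inner ℝ (z' - y') (y - y') ≤ 0) : dist y y' ≤ dist z z' := by
  rw [dist_eq_norm, dist_eq_norm]
  have hsq : ‖y - y'‖ * ‖y - y'‖ ≤ inner ℝ (z - z') (y - y') := by
    rw [← real_inner_self_eq_norm_mul_norm]
    rw [← neg_sub y y', inner_neg_right] at h
    have hsum : inner ℝ (z - z') (y - y') - inner ℝ (y - y') (y - y')
        = inner ℝ (z - y) (y - y') - inner ℝ (z' - y') (y - y') := by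
      rw [← inner_sub_left, ← inner_sub_left]
      congr 1
      abel
    linarith
  have hcs := hsq.trans (real_inner_le_norm _ _)
  rcases (norm_nonneg (y - y')).eq_or_lt with h0 | h0
  · rw [← h0]
    exact norm_nonneg _
  · exact le_of_mul_le_mul_right hcs h0

variable [MeasurableSpace E] [BorelSpace E]

/-- The part of the boundary of a convex body inside a ball has at most the Hausdorff measure of
the bounding sphere. -/
theorem Convex.hausdorffMeasure_frontier_inter_closedBall_le [CompleteSpace E] {Ω : Set E}
    (hconv : Convex ℝ Ω) (hclosed : IsClosed Ω) (hint : (interior Ω).Nonempty) {d : ℝ}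
    (hd : 0 ≤ d) (x : E) (ρ : ℝ) :
    (μH[d] : Measure E) (frontier Ω ∩ closedBall x ρ) ≤ (μH[d] : Measure E) (sphere x ρ) := by
  have hex : ∀ y : ↥(frontier Ω ∩ closedBall x ρ), ∃ z ∈ sphere x ρ,
      ∀ a ∈ Ω, inner ℝ (z - y) (a - y) ≤ 0 := by
    rintro ⟨y, hy, hyB⟩
    obtain ⟨v, hv, hvΩ⟩ := hconv.exists_outer_normal hint hy
    obtain ⟨t, ht, hts⟩ := exists_nonneg_add_smul_mem_sphere hyB hv
    refine ⟨y + t • v, hts, fun a ha => ?_⟩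
    rw [add_sub_cancel_left, real_inner_smul_left]
    exact mul_nonpos_of_nonneg_of_nonpos ht (hvΩ a ha)
  choose Z hZs hZ using hex
  have hanti : AntilipschitzWith 1 Z := AntilipschitzWith.of_le_mul_dist fun y y' => by
    rw [NNReal.coe_one, one_mul]
    exact dist_le_dist_of_inner_nonpos (hZ y y' (hclosed.frontier_subset y'.2.1))
      (hZ y' y (hclosed.frontier_subset y.2.1))
  have himage := (isometry_subtype_coe (s := frontier Ω ∩ closedBall x ρ)).hausdorffMeasure_image
    (Or.inl hd) univ
  rw [image_univ, Subtype.range_coe] at himage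
  rw [himage]
  refine (hanti.le_hausdorffMeasure_image hd univ).trans ?_
  rw [ENNReal.coe_one, ENNReal.one_rpow, one_mul]
  exact measure_mono (image_subset_iff.2 fun y _ => hZs y)

/-- Scaling bound for the Hausdorff measure of spheres. -/
theorem hausdorffMeasure_sphere_le {d : ℝ} (hd : 0 ≤ d) (x : E) {ρ : ℝ} (hρ : 0 < ρ) :
    (μH[d] : Measure E) (sphere x ρ) ≤
      ENNReal.ofReal (ρ ^ d) * (μH[d] : Measure E) (sphere 0 1) := by
  have hlip : LipschitzWith ρ.toNNReal fun u : E => x + ρ • u :=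
    LipschitzWith.of_dist_le_mul fun u v => by
      rw [dist_add_left, dist_smul₀, Real.norm_of_nonneg hρ.le, Real.coe_toNNReal _ hρ.le]
  have hsub : sphere x ρ ⊆ (fun u : E => x + ρ • u) '' sphere 0 1 := by
    intro z hz
    refine ⟨ρ⁻¹ • (z - x), ?_, ?_⟩
    · have hz' : ‖z - x‖ = ρ := by simpa [dist_eq_norm] using hz
      simp [norm_smul, hz', abs_of_pos hρ, hρ.ne']
    · simp [smul_smul, hρ.ne']
  refine (measure_mono hsub).trans ((hlip.hausdorffMeasure_image_le hd _).trans_eq ?_)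
  rw [← ENNReal.ofReal_rpow_of_pos hρ]
  rfl

end InnerProduct

/-- Layer-cake bound for a Riesz potential of a measure with polynomial growth on balls around
the singularity. -/
theorem lintegral_rpow_norm_sub_le {E : Type*} [NormedAddCommGroup E] [MeasurableSpace E]
    [BorelSpace E] [SecondCountableTopology E] (μ : Measure E) (x : E) {k : ℝ} (hk : 0 < k)
    (C : ℝ≥0∞) (hμ : ∀ ρ : ℝ, 0 < ρ → μ (closedBall x ρ) ≤ ENNReal.ofReal (ρ ^ (k + 1)) * C)
    {r : ℝ} (hr : 0 < r) :
    ∫⁻ y, ENNReal.ofReal (‖x - y‖ ^ (-k)) ∂μ ≤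
      μ univ * ENNReal.ofReal r + ENNReal.ofReal (k * r ^ (-k)⁻¹) * C := by
  have hmeas : Measurable fun y : E => ‖x - y‖ ^ (-k) := by fun_prop
  rw [lintegral_eq_lintegral_meas_lt μ
    (ae_of_all _ fun y => Real.rpow_nonneg (norm_nonneg _) _) hmeas.aemeasurable,
    ← Ioc_union_Ioi_eq_Ioi hr.le,
    lintegral_union measurableSet_Ioi (Ioc_disjoint_Ioi le_rfl)]
  refine add_le_add ?_ ?_
  · refine (lintegral_mono fun t => measure_mono (subset_univ _)).trans ?_
    simp
  · have hexp : (-k)⁻¹ * (k + 1) < -1 := by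
      have : (-k)⁻¹ * (k + 1) = -1 - k⁻¹ := by
        field_simp
        ring
      have hk' : 0 < k⁻¹ := inv_pos.2 hk
      linarith
    have hbound : ∀ t ∈ Ioi r, μ {y | t < ‖x - y‖ ^ (-k)} ≤
        ENNReal.ofReal (t ^ ((-k)⁻¹ * (k + 1))) * C := by
      intro t ht
      have ht0 : 0 < t := hr.trans ht
      rw [Real.rpow_mul ht0.le]
      refine (measure_mono fun y hy => ?_).trans (hμ _ (Real.rpow_pos_of_pos ht0 _))
      have hle := Real.rpow_le_rpow_of_nonpos ht0 (le_of_lt hy)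
        (inv_nonpos.2 (neg_nonpos.2 hk.le))
      rw [Real.rpow_rpow_inv (norm_nonneg _) (neg_ne_zero.2 hk.ne')] at hle
      rwa [mem_closedBall', dist_eq_norm]
    refine (setLIntegral_mono' measurableSet_Ioi hbound).trans ?_
    rw [lintegral_mul_const _ (by fun_prop), ← ofReal_integral_eq_lintegral_ofReal
      (integrableOn_Ioi_rpow_of_lt hexp hr)
      ((ae_restrict_iff' measurableSet_Ioi).2
        (ae_of_all _ fun t ht => Real.rpow_nonneg (hr.trans ht).le _)),
      integral_Ioi_rpow_of_lt hexp hr,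
      show (-k)⁻¹ * (k + 1) + 1 = (-k)⁻¹ by field_simp; ring]
    refine le_of_eq ?_
    congr 2
    field_simp

/-- Layer-cake estimate for the Newtonian potential of the boundary surface
measure of a smooth convex body (Remark 2.3 (i)). -/
theorem boundary_potential_layer_cake_bound
    (n : ℕ) (hn : 3 ≤ n)
    (Ω : Set (EuclideanSpace ℝ (Fin n))) (hconv : Convex ℝ Ω) (hcomp : IsCompact Ω)
    (hint : (interior Ω).Nonempty) (hsm : HasSmoothBoundary n Ω)
    (x : EuclideanSpace ℝ (Fin n)) (r : ℝ) (hr : 0 < r) :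
    (∫ y in frontier Ω, ‖x - y‖ ^ ((2 : ℝ) - (n : ℝ))
        ∂(μH[(n : ℝ) - 1] : Measure (EuclideanSpace ℝ (Fin n))))
      ≤ area n (frontier Ω) * r + ((n : ℝ) - 2) * sphereArea n * r ^ ((1 : ℝ) / ((2 : ℝ) - n)) := by
  have hn' : (3 : ℝ) ≤ n := by exact_mod_cast hn
  have hd : (0 : ℝ) ≤ (n : ℝ) - 1 := by linarith
  have hk : (0 : ℝ) < (n : ℝ) - 2 := by linarith
  have hsphere : (μH[(n : ℝ) - 1] : Measure (EuclideanSpace ℝ (Fin n))) (sphere 0 1) < ∞ := by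
    obtain ⟨m, rfl⟩ : ∃ m, n = m + 1 := ⟨n - 1, by omega⟩
    simpa using hausdorffMeasure_unit_sphere_lt_top m
  have hball : ∀ ρ : ℝ, 0 < ρ →
      (μH[(n : ℝ) - 1] : Measure (EuclideanSpace ℝ (Fin n))) (frontier Ω ∩ closedBall x ρ) ≤
        ENNReal.ofReal (ρ ^ ((n : ℝ) - 1)) *
          μH[(n : ℝ) - 1] (sphere (0 : EuclideanSpace ℝ (Fin n)) 1) := fun ρ hρ =>
    (hconv.hausdorffMeasure_frontier_inter_closedBall_le hcomp.isClosed hint hd x ρ).trans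
      (hausdorffMeasure_sphere_le hd x hρ)
  have hfrontier : (μH[(n : ℝ) - 1] : Measure (EuclideanSpace ℝ (Fin n))) (frontier Ω) < ∞ := by
    obtain ⟨R, hR0, hR⟩ := hcomp.isBounded.subset_closedBall_lt 0 x
    have h := hball R hR0
    rw [inter_eq_left.2 (hcomp.isClosed.frontier_subset.trans hR)] at h
    exact h.trans_lt (ENNReal.mul_lt_top ENNReal.ofReal_lt_top hsphere)
  have hbound := lintegral_rpow_norm_sub_le
    ((μH[(n : ℝ) - 1] : Measure (EuclideanSpace ℝ (Fin n))).restrict (frontier Ω)) x hk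
    (μH[(n : ℝ) - 1] (sphere (0 : EuclideanSpace ℝ (Fin n)) 1))
    (fun ρ hρ => by
      rw [Measure.restrict_apply isClosed_closedBall.measurableSet, inter_comm,
        show (n : ℝ) - 2 + 1 = n - 1 by ring]
      exact hball ρ hρ) hr
  rw [neg_sub, Measure.restrict_apply_univ] at hbound
  have hmeas : Measurable fun y : EuclideanSpace ℝ (Fin n) => ‖x - y‖ ^ ((2 : ℝ) - (n : ℝ)) := by
    fun_prop
  rw [integral_eq_lintegral_of_nonneg_ae
    (ae_of_all _ fun y => Real.rpow_nonneg (norm_nonneg _) _) hmeas.aestronglyMeasurable]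
  have hfin₁ := ENNReal.mul_ne_top hfrontier.ne (ENNReal.ofReal_ne_top (r := r))
  have hfin₂ := ENNReal.mul_ne_top
    (ENNReal.ofReal_ne_top (r := ((n : ℝ) - 2) * r ^ ((2 : ℝ) - n)⁻¹)) hsphere.ne
  refine (ENNReal.toReal_mono (ENNReal.add_ne_top.2 ⟨hfin₁, hfin₂⟩) hbound).trans_eq ?_
  rw [ENNReal.toReal_add hfin₁ hfin₂, ENNReal.toReal_mul, ENNReal.toReal_mul,
    ENNReal.toReal_ofReal hr.le, ENNReal.toReal_ofReal (by positivity), one_div]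
  simp only [area, sphereArea]
  ring
end
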